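/- arXiv:1606.03691 — 5 statements merged into one kernel-verified Lean document; each statement's English description precedes it below -/
import Mathlib

section
/- Let g be a Lie algebra over a field k, let M be a Lie module over g, and let 𝔲⁺, 𝔨, 𝔲⁻ be k-subspaces of g such that g = 𝔲⁺ + 𝔨 + 𝔲⁻ (as a sum of subspaces), ⁅𝔨, 𝔲⁻⁆ ⊆ 𝔲⁻, and ⁅𝔲⁺, 𝔲⁻⁆ ⊆ 𝔨. Assume moreover that x·(y·m) = 0 for all x, y ∈ 𝔲⁻ and all m ∈ M. Let V ⊆ M be a k-subspace with a·v ∈ V for all a ∈ 𝔲⁺, all z·v ∈ V for z ∈ 𝔨, and all v ∈ V. Then the subspace W := V + span_k{x·v : x ∈ 𝔲⁻, v ∈ V} is stable under the action of every element of g, and W is the smallest g-stable subspace of M containing V (i.e. every subspace of M containing V and stable under the action of g contains W). -/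
/-- The Claim in the proof of Theorem 3.2: with `g = 𝔲⁺ + 𝔨 + 𝔲⁻`,
`⁅𝔨,𝔲⁻⁆ ⊆ 𝔲⁻`, `⁅𝔲⁺,𝔲⁻⁆ ⊆ 𝔨`, the action of `𝔲⁻` squaring to zero on `M`, and
`V` stable under `𝔲⁺` and `𝔨`, the subspace `W = V + 𝔲⁻·V` is the smallest
`g`-stable subspace of `M` containing `V`. -/
theorem smallest_submodule_containing
    (k : Type*) [Field k] (L : Type*) [LieRing L] [LieAlgebra k L]
    (M : Type*) [AddCommGroup M] [Module k M] [LieRingModule L M] [LieModule k L M]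
    (𝔲p 𝔨 𝔲m : Submodule k L)
    (hsum : 𝔲p ⊔ 𝔨 ⊔ 𝔲m = ⊤)
    (h1 : ∀ z ∈ 𝔨, ∀ x ∈ 𝔲m, ⁅z, x⁆ ∈ 𝔲m)
    (h2 : ∀ a ∈ 𝔲p, ∀ x ∈ 𝔲m, ⁅a, x⁆ ∈ 𝔨)
    (hsq : ∀ x ∈ 𝔲m, ∀ y ∈ 𝔲m, ∀ m : M, ⁅x, ⁅y, m⁆⁆ = (0 : M))
    (V : Submodule k M)
    (hVp : ∀ a ∈ 𝔲p, ∀ v ∈ V, ⁅a, v⁆ ∈ V)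
    (hVk : ∀ z ∈ 𝔨, ∀ v ∈ V, ⁅z, v⁆ ∈ V) :
    (∀ y : L, ∀ w ∈ V ⊔ Submodule.span k {m : M | ∃ x ∈ 𝔲m, ∃ v ∈ V, m = ⁅x, v⁆},
        ⁅y, w⁆ ∈ V ⊔ Submodule.span k {m : M | ∃ x ∈ 𝔲m, ∃ v ∈ V, m = ⁅x, v⁆}) ∧
      ∀ U : Submodule k M, V ≤ U → (∀ y : L, ∀ u ∈ U, ⁅y, u⁆ ∈ U) →
        V ⊔ Submodule.span k {m : M | ∃ x ∈ 𝔲m, ∃ v ∈ V, m = ⁅x, v⁆} ≤ U := by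
  set N := Submodule.span k {m : M | ∃ x ∈ 𝔲m, ∃ v ∈ V, m = ⁅x, v⁆}
  have hV : ∀ v ∈ V, v ∈ V ⊔ N := fun v hv => Submodule.mem_sup_left hv
  have hm : ∀ x ∈ 𝔲m, ∀ v ∈ V, ⁅x, v⁆ ∈ V ⊔ N := fun x hx v hv =>
    Submodule.mem_sup_right (Submodule.subset_span ⟨x, hx, v, hv, rfl⟩)
  refine ⟨fun y w hw => ?_, fun U hVU hU => sup_le hVU (Submodule.span_le.2 ?_)⟩
  · have hy : y ∈ 𝔲p ⊔ 𝔨 ⊔ 𝔲m := hsum ▸ Submodule.mem_top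
    obtain ⟨b, hb, c, hc, rfl⟩ := Submodule.mem_sup.1 hy
    obtain ⟨a, ha, z, hz, rfl⟩ := Submodule.mem_sup.1 hb
    have hle : V ⊔ N ≤ (V ⊔ N).comap (LieModule.toEnd k L M (a + z + c)) := by
      refine sup_le (fun v hv => ?_) (Submodule.span_le.2 ?_)
      · simp only [Submodule.mem_comap, LieModule.toEnd_apply_apply, add_lie]
        exact add_mem (add_mem (hV _ (hVp a ha v hv)) (hV _ (hVk z hz v hv))) (hm c hc v hv)
      · rintro _ ⟨x, hx, v, hv, rfl⟩
        simp only [SetLike.mem_coe, Submodule.mem_comap, LieModule.toEnd_apply_apply, add_lie]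
        rw [hsq c hc x hx v, add_zero, leibniz_lie a x v, leibniz_lie z x v]
        exact add_mem
          (add_mem (hV _ (hVk _ (h2 a ha x hx) v hv)) (hm x hx _ (hVp a ha v hv)))
          (add_mem (hm _ (h1 z hz x hx) v hv) (hm x hx _ (hVk z hz v hv)))
    exact hle hw
  · rintro _ ⟨x, -, v, hv, rfl⟩
    exact hU x v (hVU hv)
end

section
/- Let m ≥ 1 and let Q = fromBlocks 0 1 1 0 ∈ M_{2m}(ℂ). There exists a matrix X ∈ M_{2m}(ℂ) with Xᵀ Q + Q X = 0 whose lower-left m×m block is invertible if and only if m is even. (For the forward direction: the lower-left block of such an X is necessarily antisymmetric, and an antisymmetric m×m matrix with m odd is singular.) -/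
open Matrix

/-- Membership in the split orthogonal Lie algebra forces the lower-left block to be
antisymmetric. -/
lemma Matrix.toBlocks₂₁_transpose_eq_neg {n R : Type*} [Fintype n] [DecidableEq n] [CommRing R]
    {X : Matrix (n ⊕ n) (n ⊕ n) R}
    (hX : Xᵀ * fromBlocks 0 1 1 0 + fromBlocks 0 1 1 0 * X = 0) :
    X.toBlocks₂₁ᵀ = -X.toBlocks₂₁ := by
  rw [← fromBlocks_toBlocks X, fromBlocks_transpose, fromBlocks_multiply, fromBlocks_multiply,
    fromBlocks_add, ← fromBlocks_zero, fromBlocks_inj] at hX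
  exact eq_neg_of_add_eq_zero_left (by simpa using hX.1)

/-- An invertible antisymmetric matrix over a field of characteristic different
from two has even size. -/
lemma Matrix.even_card_of_transpose_eq_neg {n K : Type*} [Fintype n] [DecidableEq n] [Field K]
    (h2 : ringChar K ≠ 2) {A : Matrix n n K} (hA : Aᵀ = -A) (hu : IsUnit A) :
    Even (Fintype.card n) := by
  by_contra hodd
  have hdet : A.det = -A.det := by
    conv_lhs => rw [← det_transpose, hA, det_neg, (Nat.not_even_iff_odd.mp hodd).neg_one_pow]
    ring
  exact ((isUnit_iff_isUnit_det A).mp hu).ne_zero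
    ((Ring.eq_self_iff_eq_zero_of_char_ne_two h2).mp hdet.symm)

/-- In every even size there is an invertible antisymmetric matrix. -/
lemma Matrix.exists_isUnit_transpose_eq_neg (R : Type*) [CommRing R] {m : ℕ} (hm : Even m) :
    ∃ A : Matrix (Fin m) (Fin m) R, Aᵀ = -A ∧ IsUnit A := by
  obtain ⟨k, rfl⟩ := hm
  refine ⟨reindex finSumFinEquiv finSumFinEquiv (J (Fin k) R), ?_, ?_⟩
  · rw [transpose_reindex, J_transpose]
    rfl
  · rw [isUnit_iff_isUnit_det, det_reindex_self]
    exact isUnit_det_J (Fin k) R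

/-- Type III case of Theorem 4.4: the split orthogonal Lie algebra `so(2m, ℂ)`
contains an element whose lower-left `m×m` block is invertible iff `m` is even. -/
theorem orthogonal_lie_algebra_invertible_lower_left_iff_even
    (m : ℕ) (hm : 1 ≤ m) :
    (∃ X : Matrix (Fin m ⊕ Fin m) (Fin m ⊕ Fin m) ℂ,
      Xᵀ * (fromBlocks 0 1 1 0) + (fromBlocks 0 1 1 0) * X = 0 ∧
        IsUnit X.toBlocks₂₁) ↔ Even m := by
  constructor
  · rintro ⟨X, hX, hu⟩
    have h2 : ringChar ℂ ≠ 2 := by simp [ringChar.eq_zero]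
    simpa using even_card_of_transpose_eq_neg h2 (toBlocks₂₁_transpose_eq_neg hX) hu
  · intro h
    obtain ⟨A, hA, hu⟩ := exists_isUnit_transpose_eq_neg ℂ h
    refine ⟨fromBlocks 0 0 A 0, ?_, by simpa using hu⟩
    simp [fromBlocks_transpose, fromBlocks_multiply, fromBlocks_add, hA]
end

section
/- Let g ≥ 1 and let Sp(2g, ℂ) = {A ∈ M_{2g}(ℂ) : Aᵀ J A = J} with J = fromBlocks 0 1 (-1) 0. The ℂ-linear span of the set Sp(2g, ℂ) inside the vector space M_{2g}(ℂ) is all of M_{2g}(ℂ). -/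
open Matrix

namespace SymplecticGroup

variable {l R : Type*} [DecidableEq l] [Fintype l] [CommRing R]

theorem fromBlocks_one_zero_one_mem {X : Matrix l l R} (hX : X.IsSymm) :
    fromBlocks 1 X 0 1 ∈ symplecticGroup l R := by
  simp [mem_iff, J, fromBlocks_transpose, fromBlocks_multiply, hX.eq]

theorem fromBlocks_one_one_zero_mem {Y : Matrix l l R} (hY : Y.IsSymm) :
    fromBlocks 1 0 Y 1 ∈ symplecticGroup l R := by
  simp [mem_iff, J, fromBlocks_transpose, fromBlocks_multiply, hY.eq]

theorem fromBlocks_upper_mem_adjoin {X : Matrix l l R} (hX : X.IsSymm) :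
    fromBlocks 0 X 0 0 ∈
      Algebra.adjoin R (symplecticGroup l R : Set (Matrix (l ⊕ l) (l ⊕ l) R)) := by
  have h := sub_mem (Algebra.subset_adjoin (R := R) (fromBlocks_one_zero_one_mem hX))
    (one_mem (Algebra.adjoin R (symplecticGroup l R : Set (Matrix (l ⊕ l) (l ⊕ l) R))))
  simpa [← fromBlocks_one, sub_eq_add_neg, fromBlocks_neg, fromBlocks_add] using h

theorem fromBlocks_lower_mem_adjoin {Y : Matrix l l R} (hY : Y.IsSymm) :
    fromBlocks 0 0 Y 0 ∈
      Algebra.adjoin R (symplecticGroup l R : Set (Matrix (l ⊕ l) (l ⊕ l) R)) := by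
  have h := sub_mem (Algebra.subset_adjoin (R := R) (fromBlocks_one_one_zero_mem hY))
    (one_mem (Algebra.adjoin R (symplecticGroup l R : Set (Matrix (l ⊕ l) (l ⊕ l) R))))
  simpa [← fromBlocks_one, sub_eq_add_neg, fromBlocks_neg, fromBlocks_add] using h

/-- Every matrix unit is a product of two symmetric matrices. -/
theorem exists_isSymm_mul_isSymm_eq_single (i j : l) (c : R) :
    ∃ X Y : Matrix l l R, X.IsSymm ∧ Y.IsSymm ∧ X * Y = single i j c := by
  by_cases hij : i = j
  · subst hij
    exact ⟨single i i 1, single i i c, transpose_single .., transpose_single .., by simp⟩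
  · refine ⟨single i i 1, single i j c + single j i c, transpose_single .., ?_, ?_⟩
    · simp [IsSymm, transpose_single, add_comm]
    · simp [mul_add, single_mul_single_of_ne, hij]

theorem fromBlocks_upperLeft_mem_adjoin (A : Matrix l l R) :
    fromBlocks A 0 0 0 ∈
      Algebra.adjoin R (symplecticGroup l R : Set (Matrix (l ⊕ l) (l ⊕ l) R)) := by
  induction A using Matrix.induction_on' with
  | h_zero => simp
  | h_add A B hA hB => simpa [fromBlocks_add] using add_mem hA hB
  | h_std_basis i j c =>
    obtain ⟨X, Y, hX, hY, h⟩ := exists_isSymm_mul_isSymm_eq_single i j c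
    simpa [fromBlocks_multiply, h] using
      mul_mem (fromBlocks_upper_mem_adjoin hX) (fromBlocks_lower_mem_adjoin hY)

variable (l R) in
theorem adjoin_eq_top :
    Algebra.adjoin R (symplecticGroup l R : Set (Matrix (l ⊕ l) (l ⊕ l) R)) = ⊤ := by
  refine eq_top_iff.2 fun M _ => ?_
  have hU := fromBlocks_upper_mem_adjoin (isSymm_one (n := l) (α := R))
  have hL := fromBlocks_lower_mem_adjoin (isSymm_one (n := l) (α := R))
  have hA := fromBlocks_upperLeft_mem_adjoin M.toBlocks₁₁
  have hB := mul_mem (fromBlocks_upperLeft_mem_adjoin M.toBlocks₁₂) hU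
  have hC := mul_mem hL (fromBlocks_upperLeft_mem_adjoin M.toBlocks₂₁)
  have hD := mul_mem (mul_mem hL (fromBlocks_upperLeft_mem_adjoin M.toBlocks₂₂)) hU
  have h := add_mem (add_mem hA hB) (add_mem hC hD)
  simpa [fromBlocks_multiply, fromBlocks_add, fromBlocks_toBlocks] using h

variable (l R) in
theorem span_eq_top :
    Submodule.span R (symplecticGroup l R : Set (Matrix (l ⊕ l) (l ⊕ l) R)) = ⊤ := by
  have h := Algebra.adjoin_eq_span R (symplecticGroup l R : Set (Matrix (l ⊕ l) (l ⊕ l) R))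
  rwa [Submonoid.closure_eq, adjoin_eq_top, Algebra.top_toSubmodule, eq_comm] at h

theorem mem_iff_transpose_mul_fromBlocks_mul {A : Matrix (l ⊕ l) (l ⊕ l) R} :
    A ∈ symplecticGroup l R ↔
      Aᵀ * fromBlocks 0 1 (-1) 0 * A = fromBlocks 0 1 (-1) 0 := by
  have h : (fromBlocks 0 1 (-1) 0 : Matrix (l ⊕ l) (l ⊕ l) R) = -J l R := by
    simp [J, fromBlocks_neg]
  rw [mem_iff', h, Matrix.mul_neg, Matrix.neg_mul, neg_inj]

end SymplecticGroup

/-- The ℂ-linear span of `Sp(2g, ℂ)` inside `M_{2g}(ℂ)` is everything. -/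
theorem span_symplectic_group_eq_top
    (g : ℕ) (hg : 1 ≤ g) :
    Submodule.span ℂ {A : Matrix (Fin g ⊕ Fin g) (Fin g ⊕ Fin g) ℂ |
        Aᵀ * (fromBlocks 0 1 (-1) 0) * A = (fromBlocks 0 1 (-1) 0)} = ⊤ := by
  rw [← SymplecticGroup.span_eq_top (Fin g) ℂ]
  congr 1
  ext A
  exact SymplecticGroup.mem_iff_transpose_mul_fromBlocks_mul.symm
end

section
/- Let g ≥ 1 and let Sp(2g, ℂ) = {A ∈ M_{2g}(ℂ) : Aᵀ J A = J} with J = fromBlocks 0 1 (-1) 0. Let c = (c_{ij}) ∈ M_{2g}(ℂ) and d ∈ ℂ. If Σ_{i,j} c_{ij} A_{ij} = d for every A ∈ Sp(2g, ℂ), then c = 0 and d = 0. Equivalently, the 4g² matrix-entry functions A ↦ A_{ij} together with the constant function 1 are ℂ-linearly independent as functions on Sp(2g, ℂ). -/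
open Matrix

section SymplecticTransvection

variable {l R : Type*} [Fintype l] [DecidableEq l] [CommRing R]

lemma J_mulVec_eq_neg_vecMul (v : l ⊕ l → R) : J l R *ᵥ v = -(v ᵥ* J l R) := by
  rw [← mulVec_transpose, J_transpose, neg_mulVec, neg_neg]

lemma vecMul_J_dotProduct_self (v : l ⊕ l → R) : v ᵥ* J l R ⬝ᵥ v = 0 := by
  simp [J, dotProduct, Fintype.sum_sum_type, vecMul_fromBlocks, vecMul_neg, mul_comm]

/-- The matrix of the symplectic transvection `x ↦ x + (vᵀ J x) v`. -/
def symplecticTransvection (v : l ⊕ l → R) : Matrix (l ⊕ l) (l ⊕ l) R :=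
  1 + vecMulVec v (v ᵥ* J l R)

lemma symplecticTransvection_mem (v : l ⊕ l → R) :
    symplecticTransvection v ∈ symplecticGroup l R := by
  rw [SymplecticGroup.mem_iff', symplecticTransvection]
  simp only [transpose_add, transpose_one, transpose_vecMulVec, add_mul, mul_add, one_mul, mul_one,
    vecMulVec_mul, mul_vecMulVec, J_mulVec_eq_neg_vecMul, vecMulVec_mulVec,
    vecMul_J_dotProduct_self]
  simp [neg_vecMulVec]

lemma symplecticTransvection_mul (v w : l ⊕ l → R) :
    symplecticTransvection v * symplecticTransvection w =
      symplecticTransvection v + symplecticTransvection w - 1 +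
        (v ᵥ* J l R ⬝ᵥ w) • vecMulVec v (w ᵥ* J l R) := by
  simp only [symplecticTransvection, add_mul, mul_add, one_mul, mul_one, vecMulVec_mul_vecMulVec]
  rw [vecMulVec_smul]
  abel

end SymplecticTransvection

/-- A linear functional vanishing on the symplectic group is zero. -/
lemma linearMap_eq_zero_of_symplecticGroup {l K : Type*} [Fintype l] [DecidableEq l] [Field K]
    (f : Matrix (l ⊕ l) (l ⊕ l) K →ₗ[K] K) (hf : ∀ A ∈ symplecticGroup l K, f A = 0) :
    f = 0 := by
  have key (v w : l ⊕ l → K) (hvw : v ᵥ* J l K ⬝ᵥ w ≠ 0) : f (vecMulVec v (w ᵥ* J l K)) = 0 := by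
    have h := hf _ (mul_mem (symplecticTransvection_mem v) (symplecticTransvection_mem w))
    rw [symplecticTransvection_mul] at h
    simpa [hf _ (symplecticTransvection_mem _), hf 1 (one_mem _), hvw] using h
  have rank_one (v w : l ⊕ l → K) : f (vecMulVec v (w ᵥ* J l K)) = 0 := by
    by_cases hvw : v ᵥ* J l K ⬝ᵥ w = 0
    · by_cases hw : J l K *ᵥ w = 0
      · have : w ᵥ* J l K = 0 := by simpa [J_mulVec_eq_neg_vecMul] using hw
        simp [this]
      · obtain ⟨i, hi⟩ := Function.ne_iff.mp hw
        have hu : Pi.single i 1 ᵥ* J l K ⬝ᵥ w ≠ 0 := by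
          rwa [← dotProduct_mulVec, single_one_dotProduct]
        have hvu : (v + Pi.single i 1) ᵥ* J l K ⬝ᵥ w ≠ 0 := by
          rwa [add_vecMul, add_dotProduct, hvw, zero_add]
        have h := key _ _ hvu
        rwa [add_vecMulVec, map_add, key _ _ hu, add_zero] at h
    · exact key v w hvw
  refine Matrix.ext_linearMap _ fun i j => LinearMap.ext_ring ?_
  have h := rank_one (Pi.single i 1) (-(Pi.single j 1 ᵥ* J l K))
  rw [neg_vecMul, vecMul_vecMul, J_squared, vecMul_neg, neg_neg, vecMul_one] at h
  simpa [single_eq_single_vecMulVec_single] using h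

/-- No ℂ-linear relations between the matrix entries of a generic element of
`Sp(2g, ℂ)`: if `Σ c_{ij} A_{ij} = d` for all symplectic `A`, then `c = 0` and `d = 0`. -/
theorem no_linear_relation_on_symplectic_entries
    (g : ℕ) (hg : 1 ≤ g)
    (c : Matrix (Fin g ⊕ Fin g) (Fin g ⊕ Fin g) ℂ) (d : ℂ)
    (h : ∀ A : Matrix (Fin g ⊕ Fin g) (Fin g ⊕ Fin g) ℂ,
      Aᵀ * (fromBlocks 0 1 (-1) 0) * A = (fromBlocks 0 1 (-1) 0) →
        ∑ i, ∑ j, c i j * A i j = d) :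
    c = 0 ∧ d = 0 := by
  have hJ : (fromBlocks 0 1 (-1) 0 : Matrix (Fin g ⊕ Fin g) (Fin g ⊕ Fin g) ℂ) =
      -J (Fin g) ℂ := by
    simp [J, fromBlocks_neg]
  have hsymp (A) (hA : A ∈ symplecticGroup (Fin g) ℂ) : ∑ i, ∑ j, c i j * A i j = d := by
    refine h A ?_
    rw [hJ, mul_neg, neg_mul, SymplecticGroup.mem_iff'.mp hA]
  have hd : d = 0 := by
    have h₁ := hsymp 1 (one_mem _)
    have h₂ := hsymp (-1) (SymplecticGroup.neg_mem (one_mem _))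
    simp only [Matrix.neg_apply, mul_neg, Finset.sum_neg_distrib, h₁] at h₂
    exact self_eq_neg.mp h₂.symm
  refine ⟨?_, hd⟩
  let f : Matrix (Fin g ⊕ Fin g) (Fin g ⊕ Fin g) ℂ →ₗ[ℂ] ℂ :=
    { toFun := fun A => ∑ i, ∑ j, c i j * A i j
      map_add' := fun A B => by simp [mul_add, Finset.sum_add_distrib]
      map_smul' := fun r A => by
        simp only [Matrix.smul_apply, smul_eq_mul, Finset.mul_sum, mul_left_comm, RingHom.id_apply] }
  have hf : f = 0 :=
    linearMap_eq_zero_of_symplecticGroup f fun A hA => (hsymp A hA).trans hd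
  ext i j
  have hij : ∑ k, ∑ m, c k m * single i j (1 : ℂ) k m = 0 := LinearMap.congr_fun hf (single i j 1)
  simpa only [single_apply, ite_and, mul_ite, mul_one, mul_zero, Finset.sum_ite_eq,
    Finset.sum_ite_irrel, Finset.sum_const_zero, Finset.mem_univ, if_true,
    Matrix.zero_apply] using hij
end

section
/- Let g ≥ 1, let Sp(2g, ℂ) = {A ∈ M_{2g}(ℂ) : Aᵀ J A = J} with J = fromBlocks 0 1 (-1) 0, and let P ∈ M_{2g}(ℂ) be an invertible matrix. Let c = (c_{ij}) ∈ M_{2g}(ℂ) and d ∈ ℂ. If Σ_{i,j} c_{ij} (A·P)_{ij} = d for every A ∈ Sp(2g, ℂ), then c = 0 and d = 0. -/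
open Matrix

section IsometryGroup

variable {n R : Type*} [Fintype n] [DecidableEq n] [CommRing R] {J : Matrix n n R}

/-- The symplectic transvection `x ↦ x + ⟨v, x⟩ v` preserves the alternating form `J`. -/
theorem transvection_isometry (hJ : Jᵀ = -J) (hJ' : ∀ x, x ⬝ᵥ J *ᵥ x = 0) (v : n → R) :
    (1 + vecMulVec v (v ᵥ* J))ᵀ * J * (1 + vecMulVec v (v ᵥ* J)) = J := by
  have hv : (v ᵥ* J) ⬝ᵥ v = 0 := by rw [← dotProduct_mulVec, hJ']
  have hw : J *ᵥ v = -(v ᵥ* J) := by rw [← vecMul_transpose, hJ, vecMul_neg]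
  have h₁ : J * vecMulVec v (v ᵥ* J) = -vecMulVec (v ᵥ* J) (v ᵥ* J) := by
    rw [mul_vecMulVec, hw, neg_vecMulVec]
  have h₂ : vecMulVec (v ᵥ* J) v * J = vecMulVec (v ᵥ* J) (v ᵥ* J) := by
    rw [vecMulVec_mul]
  rw [transpose_add, transpose_one, transpose_vecMulVec, add_mul, one_mul, h₂, mul_add, mul_one,
    add_mul, h₁, vecMulVec_mul_vecMulVec, hv]
  simp

/-- The isometries of a nondegenerate alternating form span the whole matrix algebra. -/
theorem span_isometries_eq_top (hJ : Jᵀ = -J) (hJ' : ∀ x, x ⬝ᵥ J *ᵥ x = 0) (hu : IsUnit J) :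
    Submodule.span R {A : Matrix n n R | Aᵀ * J * A = J} = ⊤ := by
  set S := Submodule.span R {A : Matrix n n R | Aᵀ * J * A = J}
  have hdet := (isUnit_iff_isUnit_det J).1 hu
  have hprod (u v : n → R) : (u ⬝ᵥ J *ᵥ v) • vecMulVec u (v ᵥ* J) ∈ S := by
    have hT (x : n → R) : 1 + vecMulVec x (x ᵥ* J) ∈ S :=
      Submodule.subset_span (transvection_isometry hJ hJ' x)
    have hTT : (1 + vecMulVec u (u ᵥ* J)) * (1 + vecMulVec v (v ᵥ* J)) ∈ S := by
      refine Submodule.subset_span ?_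
      calc _ = (1 + vecMulVec v (v ᵥ* J))ᵀ *
              ((1 + vecMulVec u (u ᵥ* J))ᵀ * J * (1 + vecMulVec u (u ᵥ* J))) *
              (1 + vecMulVec v (v ᵥ* J)) := by simp only [transpose_mul, Matrix.mul_assoc]
        _ = J := by simp only [transvection_isometry hJ hJ']
    have h1 : (1 : Matrix n n R) ∈ S := Submodule.subset_span (by simp)
    convert S.add_mem (S.sub_mem (S.sub_mem hTT (hT u)) (hT v)) h1 using 1
    rw [dotProduct_mulVec, ← vecMulVec_smul, ← vecMulVec_mul_vecMulVec]
    noncomm_ring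
  have hrank (i : n) (v : n → R) : vecMulVec (Pi.single i 1) (v ᵥ* J) ∈ S := by
    set u : n → R := Pi.single i 1
    set w : n → R := J⁻¹ *ᵥ u
    have hw : u ⬝ᵥ J *ᵥ w = 1 := by
      rw [mulVec_mulVec, mul_nonsing_inv _ hdet, one_mulVec]
      simp [u]
    set a := 1 - u ⬝ᵥ J *ᵥ v
    have hv : u ⬝ᵥ J *ᵥ (v + a • w) = 1 := by
      rw [mulVec_add, mulVec_smul, dotProduct_add, dotProduct_smul, hw]
      simp [a]
    have hmem := hprod u (v + a • w)
    have hmem' := hprod u w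
    rw [hv, one_smul] at hmem
    rw [hw, one_smul] at hmem'
    convert S.sub_mem hmem (S.smul_mem a hmem') using 1
    rw [add_vecMul, smul_vecMul, vecMulVec_add, vecMulVec_smul, add_sub_cancel_right]
  refine eq_top_iff.2 fun A _ => ?_
  rw [matrix_eq_sum_single A]
  refine S.sum_mem fun i _ => S.sum_mem fun j _ => ?_
  have h := S.smul_mem (A i j) (hrank i (Pi.single j 1 ᵥ* J⁻¹))
  rw [vecMul_vecMul, nonsing_inv_mul _ hdet, vecMul_one, ← single_eq_single_vecMulVec_single,
    smul_single, smul_eq_mul, mul_one] at h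
  exact h

end IsometryGroup

/-- No ℂ-linear relations between the entries of `A·P` for `A` a generic element of
`Sp(2g, ℂ)` and `P` a fixed invertible matrix. -/
theorem no_linear_relation_on_symplectic_entries_mul_invertible
    (g : ℕ) (hg : 1 ≤ g)
    (P : Matrix (Fin g ⊕ Fin g) (Fin g ⊕ Fin g) ℂ) (hP : IsUnit P)
    (c : Matrix (Fin g ⊕ Fin g) (Fin g ⊕ Fin g) ℂ) (d : ℂ)
    (h : ∀ A : Matrix (Fin g ⊕ Fin g) (Fin g ⊕ Fin g) ℂ,
      Aᵀ * (fromBlocks 0 1 (-1) 0) * A = (fromBlocks 0 1 (-1) 0) →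
        ∑ i, ∑ j, c i j * (A * P) i j = d) :
    c = 0 ∧ d = 0 := by
  have hd : d = 0 := by
    have h₁ := h 1 (by simp)
    have h₂ := h (-1) (by simp)
    simp only [Matrix.neg_mul, Matrix.neg_apply, mul_neg, Finset.sum_neg_distrib, h₁] at h₂
    exact self_eq_neg.1 h₂.symm
  refine ⟨?_, hd⟩
  set Ω : Matrix (Fin g ⊕ Fin g) (Fin g ⊕ Fin g) ℂ := fromBlocks 0 1 (-1) 0 with hΩ
  have hneg : Ωᵀ = -Ω := by simp [hΩ, fromBlocks_transpose, fromBlocks_neg]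
  have halt (x : Fin g ⊕ Fin g → ℂ) : x ⬝ᵥ Ω *ᵥ x = 0 := by
    refine self_eq_neg.1 ?_
    conv_lhs => rw [dotProduct_mulVec, dotProduct_comm, ← mulVec_transpose, hneg, neg_mulVec,
      dotProduct_neg]
  have hunit : IsUnit Ω := IsUnit.of_mul_eq_one (-Ω) (by
    simp [hΩ, fromBlocks_neg, fromBlocks_multiply])
  let φ : Matrix (Fin g ⊕ Fin g) (Fin g ⊕ Fin g) ℂ →ₗ[ℂ] ℂ :=
    traceLinearMap _ ℂ ℂ ∘ₗ LinearMap.mulLeft ℂ cᵀ ∘ₗ LinearMap.mulRight ℂ P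
  have hφ (A) : φ A = ∑ i, ∑ j, c i j * (A * P) i j := by
    rw [Finset.sum_comm]
    simp [φ, trace, Matrix.mul_apply (M := cᵀ)]
  have hφ0 : φ = 0 := LinearMap.ext_on (span_isometries_eq_top hneg halt hunit) fun A hA => by
    rw [hφ, h A hA, hd, LinearMap.zero_apply]
  have htrace (B : Matrix (Fin g ⊕ Fin g) (Fin g ⊕ Fin g) ℂ) : trace (cᵀ * B) = 0 := by
    have := LinearMap.congr_fun hφ0 (B * P⁻¹)
    simpa [φ, Matrix.mul_assoc, nonsing_inv_mul _ ((isUnit_iff_isUnit_det P).1 hP)] using this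
  ext i j
  simpa [trace_mul_single] using htrace (single i j 1)
end
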